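/- arXiv:1706.10200 — 4 statements merged into one kernel-verified Lean document; each statement's English description precedes it below -/
import Mathlib

section
/- For every n ≥ 2, the center sponsored spanning star S_n is a pure Nash equilibrium of the degree price network creation game (degNCG): no agent (neither the center nor any leaf) can strictly decrease her cost by unilaterally replacing her strategy with any other strategy. -/
/-!
In the star every bought edge leads to a leaf, of degree one, so nobody pays for edges and the
cost of an agent is her distance sum. A deviation `t` of agent `u` is then compared with the star
node by node: the distance from `u` to `w` in the star is at most the new distance plus the price
of `w`, if bought (`starStrat_edist_le`). This is clear when that distance is at most one. It
exceeds one only between two leaves, where it is two: if `u` buys the edge to `w`, then `w` gets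
degree at least two, hence a price of at least one, on top of distance one; if she does not, then
`w` stays non-adjacent and so at distance at least two.
-/

/-!
Degree price network creation games (degNCG / degkNCG / degAOG / degkAOG).

A strategy vector assigns to each agent `u` a finite set `st u` of nodes to
which `u` buys an edge.  The induced graph has an edge `{u,v}` iff `v ∈ st u`
or `u ∈ st v`.  The cost of agent `u` is the sum of `deg v - 1` over all `v`
to which `u` bought an edge, plus the sum of (extended, i.e. `⊤` when
unreachable) graph distances from `u` to all nodes.
-/

/-- A strategy vector: each agent picks the set of nodes it buys edges to. -/
abbrev Strategy (V : Type) := V → Finset V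

variable {V : Type} [Fintype V] [DecidableEq V]

/-- The network induced by a strategy vector: `{u,v}` is an edge iff
`v ∈ st u` or `u ∈ st v`. -/
def netG (st : Strategy V) : SimpleGraph V :=
  SimpleGraph.fromRel (fun u v => v ∈ st u)

/-- The degree of a node in the induced network. -/
noncomputable def deg (st : Strategy V) (v : V) : ℕ :=
  letI : DecidableRel (netG st).Adj := Classical.decRel _
  (netG st).degree v

/-- The cost of agent `u`: degree-prices of the bought edges plus the sum of
the distances to all nodes (`⊤` if some node is unreachable). -/
noncomputable def cost (st : Strategy V) (u : V) : ℕ∞ :=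
  ((∑ v ∈ st u, (deg st v - 1) : ℕ) : ℕ∞) + ∑ w, (netG st).edist u w

/-- A strategy vector is valid if nobody buys a self-loop and every edge has
exactly one owner. -/
def Valid (st : Strategy V) : Prop :=
  (∀ u, u ∉ st u) ∧ (∀ u v, v ∈ st u → u ∉ st v)

/-- Pure Nash equilibrium of the degNCG: no agent can strictly decrease her
cost by unilaterally switching to any other strategy. -/
def IsNE (st : Strategy V) : Prop :=
  ∀ (u : V) (t : Finset V), u ∉ t →
    cost st u ≤ cost (Function.update st u t) u

/-- `k`-local Nash equilibrium of the degkNCG: no agent can strictly decrease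
her cost by a deviation in which every newly bought edge goes to a node at
distance at most `k` in the current graph. -/
def IskNE (k : ℕ) (st : Strategy V) : Prop :=
  ∀ (u : V) (t : Finset V), u ∉ t →
    (∀ v ∈ t \ st u, (netG st).edist u v ≤ k) →
    cost st u ≤ cost (Function.update st u t) u

/-- Equilibrium of the add-only game degAOG: no agent can strictly decrease
her cost by adding edges (deviations are supersets of the current strategy). -/
def IsAOEq (st : Strategy V) : Prop :=
  ∀ (u : V) (t : Finset V), u ∉ t → st u ⊆ t →
    cost st u ≤ cost (Function.update st u t) u

/-- Equilibrium of the `k`-local add-only game degkAOG. -/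
def IskAOEq (k : ℕ) (st : Strategy V) : Prop :=
  ∀ (u : V) (t : Finset V), u ∉ t → st u ⊆ t →
    (∀ v ∈ t \ st u, (netG st).edist u v ≤ k) →
    cost st u ≤ cost (Function.update st u t) u

/-- The social cost: the sum of all agents' costs. -/
noncomputable def social (st : Strategy V) : ℕ∞ :=
  ∑ u, cost st u

/-- The center sponsored spanning star on `n + 2` nodes: agent `0` buys an
edge to every other agent, everybody else buys nothing. -/
def starStrat (n : ℕ) : Strategy (Fin (n + 2)) := fun u =>
  if u = 0 then ({0} : Finset (Fin (n + 2)))ᶜ else ∅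

lemma starStrat_adj {n : ℕ} {a b : Fin (n + 2)} :
    (netG (starStrat n)).Adj a b ↔ a ≠ b ∧ (a = 0 ∨ b = 0) := by
  simp only [netG, SimpleGraph.fromRel_adj, starStrat]
  by_cases ha : a = 0 <;> by_cases hb : b = 0 <;> simp [ha, hb]

lemma starStrat_deg_leaf {n : ℕ} {v : Fin (n + 2)} (hv : v ≠ 0) : deg (starStrat n) v = 1 := by
  classical
  unfold deg
  rw [← SimpleGraph.card_neighborFinset_eq_degree, Finset.card_eq_one]
  refine ⟨0, ?_⟩
  ext w
  simp only [SimpleGraph.mem_neighborFinset, starStrat_adj, Finset.mem_singleton]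
  grind

/-- The leaves are free, so nobody pays for edges in the star. -/
lemma starStrat_price (n : ℕ) (u : Fin (n + 2)) :
    ∑ v ∈ starStrat n u, (deg (starStrat n) v - 1) = 0 := by
  refine Finset.sum_eq_zero fun v hv => ?_
  have hv0 : v ≠ 0 := by
    rintro rfl
    simp only [starStrat] at hv
    split_ifs at hv <;> simp_all
  simp [starStrat_deg_leaf hv0]

lemma one_le_edist {W : Type} (G : SimpleGraph W) {a b : W} (h : a ≠ b) : 1 ≤ G.edist a b :=
  Order.one_le_iff_pos.2 (SimpleGraph.edist_pos_of_ne h)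

lemma two_le_edist {W : Type} (G : SimpleGraph W) {a b : W} (h : a ≠ b) (hadj : ¬ G.Adj a b) :
    2 ≤ G.edist a b := by
  have h1 : 1 < G.edist a b :=
    lt_of_le_of_ne (one_le_edist G h) fun e => hadj (SimpleGraph.edist_eq_one_iff_adj.1 e.symm)
  have := Order.add_one_le_of_lt h1
  rwa [one_add_one_eq_two] at this

/-- A leaf `w` bought by another leaf `u` has the two neighbours `0` and `u`. -/
lemma two_le_deg_update {n : ℕ} {u w : Fin (n + 2)} {t : Finset (Fin (n + 2))}
    (hu : u ≠ 0) (hw : w ≠ 0) (huw : u ≠ w) (hwt : w ∈ t) :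
    2 ≤ deg (Function.update (starStrat n) u t) w := by
  classical
  unfold deg
  rw [← SimpleGraph.card_neighborFinset_eq_degree]
  refine (Finset.card_pair hu.symm).symm.le.trans (Finset.card_le_card fun x hx => ?_)
  rw [SimpleGraph.mem_neighborFinset, netG, SimpleGraph.fromRel_adj]
  rcases Finset.mem_insert.1 hx with rfl | hx
  · refine ⟨hw, Or.inr ?_⟩
    rw [Function.update_of_ne hu.symm]
    simp [starStrat, hw]
  · rw [Finset.mem_singleton.1 hx]
    exact ⟨huw.symm, Or.inr (by simpa using hwt)⟩

/-- Node by node, a deviation saves no more distance than it costs in edge price. -/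
lemma starStrat_edist_le {n : ℕ} (u w : Fin (n + 2)) (t : Finset (Fin (n + 2))) :
    (netG (starStrat n)).edist u w ≤
      ((if w ∈ t then deg (Function.update (starStrat n) u t) w - 1 else 0 : ℕ) : ℕ∞) +
        (netG (Function.update (starStrat n) u t)).edist u w := by
  by_cases huw : u = w
  · subst huw
    simp
  by_cases hc : u = 0 ∨ w = 0
  · rw [SimpleGraph.edist_eq_one_iff_adj.2 (starStrat_adj.2 ⟨huw, hc⟩)]
    exact (one_le_edist _ huw).trans le_add_self
  obtain ⟨hu, hw⟩ := not_or.1 hc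
  have h2 : (netG (starStrat n)).edist u w ≤ 2 := by
    refine (SimpleGraph.edist_triangle (v := 0)).trans (le_of_eq ?_)
    rw [SimpleGraph.edist_eq_one_iff_adj.2 (starStrat_adj.2 ⟨hu, Or.inr rfl⟩),
      SimpleGraph.edist_eq_one_iff_adj.2 (starStrat_adj.2 ⟨Ne.symm hw, Or.inl rfl⟩),
      one_add_one_eq_two]
  refine h2.trans ?_
  by_cases hwt : w ∈ t
  · rw [if_pos hwt, ← one_add_one_eq_two]
    refine add_le_add ?_ (one_le_edist _ huw)
    have := two_le_deg_update hu hw huw hwt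
    exact_mod_cast (by omega : 1 ≤ deg (Function.update (starStrat n) u t) w - 1)
  · refine (two_le_edist _ huw ?_).trans le_add_self
    simp [netG, hwt, Function.update_of_ne (Ne.symm huw), starStrat, hw]

/-- For every `n ≥ 2` (here: `n + 2` nodes), the center sponsored
spanning star is a pure Nash equilibrium of the degNCG: no agent can strictly
decrease her cost by unilaterally replacing her strategy with any other
strategy. -/
theorem star_is_NE (n : ℕ) : IsNE (starStrat n) := by
  intro u t _
  unfold cost
  -- Spread the edge prices over all nodes, to compare the two costs termwise.
  have hprice : ∑ v ∈ t, (deg (Function.update (starStrat n) u t) v - 1) =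
      ∑ v, if v ∈ t then deg (Function.update (starStrat n) u t) v - 1 else 0 := by
    simp
  rw [starStrat_price, Nat.cast_zero, zero_add, Function.update_self, hprice, Nat.cast_sum,
    ← Finset.sum_add_distrib]
  exact Finset.sum_le_sum fun w _ => starStrat_edist_le u w t
end

section
/- For every n ≥ 2, the center sponsored spanning star S_n is an equilibrium of the degree price add-only game (degAOG): no agent can strictly decrease her cost by adding any set of new edges to her strategy. -/
variable {V : Type} [Fintype V] [DecidableEq V]

lemma netG_adj {W : Type} (st : Strategy W) (u v : W) :
    (netG st).Adj u v ↔ u ≠ v ∧ (v ∈ st u ∨ u ∈ st v) :=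
  SimpleGraph.fromRel_adj _ _ _

lemma two_le_deg {W : Type} [Fintype W] {st : Strategy W} {a b w : W} (hab : a ≠ b)
    (ha : (netG st).Adj w a) (hb : (netG st).Adj w b) : 2 ≤ deg st w := by
  unfold deg
  rw [← SimpleGraph.card_neighborFinset_eq_degree]
  exact Finset.one_lt_card.2 ⟨a, by simpa using ha, b, by simpa using hb, hab⟩

lemma star_adj_center (n : ℕ) {w : Fin (n + 2)} (hw : w ≠ 0) :
    (netG (starStrat n)).Adj w 0 := by
  rw [netG_adj]
  exact ⟨hw, Or.inr (by simp [starStrat, hw])⟩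

lemma star_edist_le_two (n : ℕ) {u w : Fin (n + 2)} (hu : u ≠ 0) (hw : w ≠ 0) :
    (netG (starStrat n)).edist u w ≤ 2 :=
  SimpleGraph.edist_le
    (.cons (star_adj_center n hu) (.cons (star_adj_center n hw).symm .nil))

/-- For a leaf `u`, the distance to `w` in the star is covered by the distance to `w` after the
deviation to `t` together with the price `u` pays for an edge to `w`, if she buys one. -/
lemma star_edist_le (n : ℕ) {u : Fin (n + 2)} (hu : u ≠ 0) (t : Finset (Fin (n + 2)))
    (w : Fin (n + 2)) :
    (netG (starStrat n)).edist u w ≤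
      ((if w ∈ t then deg (Function.update (starStrat n) u t) w - 1 else 0 : ℕ) : ℕ∞) +
        (netG (Function.update (starStrat n) u t)).edist u w := by
  set st' := Function.update (starStrat n) u t with hst'
  by_cases hwu : w = u
  · subst hwu; simp
  have h1 : 1 ≤ (netG st').edist u w := by
    rw [Order.one_le_iff_pos]
    exact SimpleGraph.edist_pos_of_ne (Ne.symm hwu)
  by_cases hw : w = 0
  · subst hw
    rw [SimpleGraph.edist_eq_one_iff_adj.2 (star_adj_center n hu)]
    exact h1.trans le_add_self
  refine (star_edist_le_two n hu hw).trans ?_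
  by_cases hwt : w ∈ t
  · have hd : 2 ≤ deg st' w := by
      refine two_le_deg (Ne.symm hu) ?_ ?_
      · rw [netG_adj]
        exact ⟨hw, Or.inr (by simp [hst', Function.update_of_ne (Ne.symm hu), starStrat, hw])⟩
      · rw [netG_adj]
        exact ⟨hwu, Or.inr (by simp [hst', hwt])⟩
    rw [if_pos hwt, ← one_add_one_eq_two]
    exact add_le_add (by exact_mod_cast (by omega : 1 ≤ deg st' w - 1)) h1
  · have hna : ¬ (netG st').Adj u w := by
      rw [netG_adj]
      simp [hst', hwt, Function.update_of_ne hwu, starStrat, hw]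
    have h2 : 1 < (netG st').edist u w :=
      lt_of_le_of_ne h1 fun h => hna (SimpleGraph.edist_eq_one_iff_adj.1 h.symm)
    rw [← one_add_one_eq_two]
    exact (Order.add_one_le_of_lt h2).trans le_add_self

/-- For every `n ≥ 2` (here: `n + 2` nodes), the center sponsored
spanning star is an equilibrium of the add-only game degAOG: no agent can
strictly decrease her cost by adding any set of new edges to her strategy. -/
theorem star_is_AOEq (n : ℕ) : IsAOEq (starStrat n) := by
  intro u t hut hsub
  by_cases hu : u = 0
  · subst hu
    -- The center already buys every available edge, so `t` is her current strategy.
    have ht : t = starStrat n 0 := by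
      refine Finset.Subset.antisymm (fun v hv => ?_) hsub
      have hv0 : v ≠ 0 := fun h => hut (h ▸ hv)
      simp [starStrat, hv0]
    rw [ht, Function.update_eq_self]
  · have h0 : starStrat n u = ∅ := by simp [starStrat, hu]
    unfold cost
    rw [h0, Function.update_self, Finset.sum_empty, Nat.cast_zero, zero_add]
    refine (Finset.sum_le_sum fun w _ => star_edist_le n hu t w).trans_eq ?_
    rw [Finset.sum_add_distrib, ← Nat.cast_sum, Finset.sum_ite_mem, Finset.univ_inter]
end

section
/- Every Nash equilibrium of the degNCG whose induced graph is connected has diameter at most 3. -/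
variable {V : Type} [Fintype V] [DecidableEq V]

/-- The strategy vector in which `u` additionally buys an edge to `v`. -/
def addEdge (st : Strategy V) (u v : V) : Strategy V :=
  Function.update st u (insert v (st u))

theorem addEdge_adj {st : Strategy V} {u v : V} (huv : u ≠ v) (x y : V) :
    (netG (addEdge st u v)).Adj x y ↔
      (netG st).Adj x y ∨ (x = u ∧ y = v) ∨ (x = v ∧ y = u) := by
  simp only [netG, addEdge, SimpleGraph.fromRel_adj, Function.update_apply]
  by_cases hx : x = u <;> by_cases hy : y = u <;> simp_all [eq_comm] <;> grind

theorem deg_eq_card (st : Strategy V) (v : V) [DecidablePred ((netG st).Adj v)] :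
    deg st v = (Finset.univ.filter ((netG st).Adj v)).card := by
  classical
  rw [deg, ← SimpleGraph.card_neighborFinset_eq_degree]
  congr 1
  ext w
  simp

theorem deg_addEdge_le_of_ne {st : Strategy V} {u v x : V} (huv : u ≠ v) (hxu : x ≠ u)
    (hxv : x ≠ v) : deg (addEdge st u v) x ≤ deg st x := by
  classical
  rw [deg_eq_card, deg_eq_card]
  apply Finset.card_le_card
  intro w
  simp [addEdge_adj huv, hxu, hxv]

theorem deg_addEdge_le {st : Strategy V} {u v : V} (huv : u ≠ v) :
    deg (addEdge st u v) v ≤ deg st v + 1 := by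
  classical
  rw [deg_eq_card, deg_eq_card]
  refine le_trans (Finset.card_le_card ?_) (Finset.card_insert_le u _)
  intro w
  simp only [Finset.mem_filter, Finset.mem_univ, true_and, addEdge_adj huv, Finset.mem_insert]
  grind

/-- In a connected network the cost is a natural number. -/
theorem cost_eq_of_connected {st : Strategy V} (hc : (netG st).Connected) (u : V) :
    cost st u = ((∑ v ∈ st u, (deg st v - 1) + ∑ w, (netG st).dist u w : ℕ) : ℕ∞) := by
  have h (w : V) : (netG st).edist u w = ((netG st).dist u w : ℕ∞) :=
    (hc u w).coe_dist_eq_edist.symm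
  simp [cost, h]

/-- Buying an edge to `v` raises the edge costs of `u` by at most the old degree of `v`. -/
theorem price_addEdge_le {st : Strategy V} {u v : V} (hu : u ∉ st u) (huv : u ≠ v)
    (hvu : v ∉ st u) :
    ∑ x ∈ addEdge st u v u, (deg (addEdge st u v) x - 1) ≤
      deg st v + ∑ x ∈ st u, (deg st x - 1) := by
  have hS : addEdge st u v u = insert v (st u) := by simp [addEdge]
  rw [hS, Finset.sum_insert hvu]
  have h1 := deg_addEdge_le (st := st) huv
  refine Nat.add_le_add (by omega) (Finset.sum_le_sum fun x hx => ?_)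
  exact Nat.sub_le_sub_right
    (deg_addEdge_le_of_ne huv (ne_of_mem_of_not_mem hx hu) (ne_of_mem_of_not_mem hx hvu)) 1

/-- Buying an edge to a node `v` at distance at least `4` lowers the distance cost by at least
`deg v + 3`: by `3` for `v` itself and by `1` for each neighbour of `v`. -/
theorem dist_addEdge_le {st : Strategy V} {u v : V} (hc : (netG st).Connected)
    (h4 : 4 ≤ (netG st).dist u v) :
    (∑ w, (netG (addEdge st u v)).dist u w) + (deg st v + 3) ≤ ∑ w, (netG st).dist u w := by
  classical
  have huv : u ≠ v := by
    rintro rfl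
    simp at h4
  have hle : netG st ≤ netG (addEdge st u v) := fun x y h => (addEdge_adj huv x y).2 (.inl h)
  have hc' := hc.mono hle
  have hadj : (netG (addEdge st u v)).Adj u v := (addEdge_adj huv u v).2 (by simp)
  have hd1 : (netG (addEdge st u v)).dist u v = 1 := SimpleGraph.dist_eq_one_iff_adj.2 hadj
  have hsum : ∑ w, ((if (netG st).Adj v w then 1 else 0) + (if w = v then 3 else 0)) =
      deg st v + 3 := by
    rw [Finset.sum_add_distrib, deg_eq_card, Finset.card_filter]
    simp
  rw [← hsum, ← Finset.sum_add_distrib]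
  refine Finset.sum_le_sum fun w _ => ?_
  have hmono : (netG (addEdge st u v)).dist u w ≤ (netG st).dist u w :=
    SimpleGraph.Reachable.dist_anti hle (hc u w)
  by_cases hw : w = v
  · subst hw
    simp only [SimpleGraph.irrefl, if_false, if_true]
    omega
  by_cases ha : (netG st).Adj v w
  · have h1 := hc'.dist_triangle (u := u) (v := v) (w := w)
    have h2 : (netG (addEdge st u v)).dist v w = 1 :=
      SimpleGraph.dist_eq_one_iff_adj.2 (hle ha)
    have h3 := hc.dist_triangle (u := u) (v := w) (w := v)
    have h5 : (netG st).dist w v = 1 := SimpleGraph.dist_eq_one_iff_adj.2 ha.symm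
    simp only [ha, hw, if_true, if_false]
    omega
  · simpa [ha, hw] using hmono

/-- Every Nash equilibrium of the degNCG whose induced graph is
connected has diameter at most 3. -/
theorem diam_NE_le_three (n : ℕ) (st : Strategy (Fin n)) (hv : Valid st)
    (hne : IsNE st) (hc : (netG st).Connected) :
    (netG st).diam ≤ 3 := by
  by_contra! hd
  have := hc.nonempty
  obtain ⟨u, v, huvd⟩ := (netG st).exists_dist_eq_diam
  have h4 : 4 ≤ (netG st).dist u v := by omega
  have huv : u ≠ v := by
    rintro rfl
    simp at h4
  have hvu : v ∉ st u := by
    intro h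
    have : (netG st).Adj u v := by
      simp [netG, SimpleGraph.fromRel_adj, huv, h]
    rw [SimpleGraph.dist_eq_one_iff_adj.2 this] at h4
    omega
  have hu := hv.1 u
  have hc' : (netG (addEdge st u v)).Connected :=
    hc.mono fun x y h => (addEdge_adj huv x y).2 (.inl h)
  have key : cost st u ≤ cost (addEdge st u v) u := hne u (insert v (st u)) (by simp [huv, hu])
  rw [cost_eq_of_connected hc, cost_eq_of_connected hc', Nat.cast_le] at key
  have h1 := price_addEdge_le hu huv hvu
  have h2 := dist_addEdge_le hc h4
  omega
end

section
/- The Price of Anarchy of the degNCG is bounded by an absolute constant: there exists a constant c (independent of n; c = 20 suffices) such that for every n ≥ 2, every Nash equilibrium s of the degNCG on n nodes with connected induced graph, and every strategy vector s' on the same n nodes with connected induced graph, cost(G(s)) ≤ c · cost(G(s')). -/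
variable {V : Type} [Fintype V] [DecidableEq V]

open Classical in
/-- The closed neighbourhood of `v` in `H`. -/
noncomputable def closedNbhd (H : SimpleGraph V) (v : V) : Finset V :=
  Finset.univ.filter (fun w => w = v ∨ H.Adj v w)

/-- Every agent `u` admits a target set `S` which is a maximal packing of closed neighbourhoods
of `H` centred outside `u`. -/
lemma exists_packing (H : SimpleGraph V) (u : V) :
    ∃ S : Finset V, u ∉ S ∧ (S : Set V).PairwiseDisjoint (closedNbhd H) ∧
      ∀ w, w ≠ u → ∃ s ∈ S, ¬ Disjoint (closedNbhd H s) (closedNbhd H w) := by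
  classical
  obtain ⟨S, hS, hmax⟩ := Finset.exists_max_image
    (Finset.univ.filter (fun S : Finset V =>
      u ∉ S ∧ (S : Set V).PairwiseDisjoint (closedNbhd H))) Finset.card
    ⟨∅, by simp⟩
  simp only [Finset.mem_filter, Finset.mem_univ, true_and] at hS hmax
  refine ⟨S, hS.1, hS.2, fun w hw => ?_⟩
  by_contra! hcon
  have hwS : w ∉ S := by
    intro h
    have hself := hcon w h
    rw [disjoint_self] at hself
    have : w ∈ closedNbhd H w := by simp [closedNbhd]
    rw [hself] at this
    simp at this
  have := hmax (insert w S) ⟨by simp [hS.1, hw.symm], by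
    rw [Finset.coe_insert]
    exact hS.2.insert fun j hj _ => (hcon j hj).symm⟩
  rw [Finset.card_insert_of_notMem hwS] at this
  omega

lemma edist_le_one_of_mem {H G : SimpleGraph V} (hHG : H ≤ G) {v w : V}
    (h : w ∈ closedNbhd H v) : G.edist v w ≤ 1 := by
  simp only [closedNbhd, Finset.mem_filter, Finset.mem_univ, true_and] at h
  rcases h with rfl | h
  · simp
  · exact (SimpleGraph.edist_eq_one_iff_adj.2 (hHG h)).le

lemma netG_update_empty_le (st : Strategy V) (u : V) (S : Finset V) :
    netG (Function.update st u ∅) ≤ netG (Function.update st u S) := by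
  intro a b h
  simp only [netG, SimpleGraph.fromRel_adj, Function.update_apply] at h ⊢
  refine ⟨h.1, h.2.imp (fun h => ?_) (fun h => ?_)⟩ <;> split_ifs at h ⊢ <;> simp_all

/-- After `u` switches to `S`, the price of an edge to `v ≠ u` is at most the degree of `v` in the
network without the edges of `u`, hence at most the size of its closed neighbourhood there. -/
lemma deg_update_sub_one_le (st : Strategy V) (u : V) (S : Finset V) {v : V} (hv : v ≠ u) :
    deg (Function.update st u S) v - 1 ≤
      (closedNbhd (netG (Function.update st u ∅)) v).card := by
  classical
  have : deg (Function.update st u S) v ≤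
      (insert u (closedNbhd (netG (Function.update st u ∅)) v)).card := by
    unfold deg
    rw [← SimpleGraph.card_neighborFinset_eq_degree]
    apply Finset.card_le_card
    intro w hw
    rw [SimpleGraph.mem_neighborFinset] at hw
    simp only [Finset.mem_insert, closedNbhd, Finset.mem_filter, Finset.mem_univ, true_and]
    by_cases hwu : w = u
    · exact Or.inl hwu
    · right; right
      simpa [netG, SimpleGraph.fromRel_adj, Function.update_apply, hv, hwu] using hw
  have := this.trans (Finset.card_insert_le _ _)
  omega

lemma cost_le_of_isNE {st : Strategy V} (h : IsNE st) (u : V) :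
    cost st u ≤ ((4 * Fintype.card V : ℕ) : ℕ∞) := by
  classical
  set H := netG (Function.update st u ∅) with hH
  obtain ⟨S, huS, hdisj, hmax⟩ := exists_packing H u
  refine (h u S huS).trans ?_
  set G := netG (Function.update st u S) with hG
  have hHG : H ≤ G := netG_update_empty_le st u S
  have hprice : ∑ v ∈ S, (deg (Function.update st u S) v - 1) ≤ Fintype.card V := by
    calc ∑ v ∈ S, (deg (Function.update st u S) v - 1)
        ≤ ∑ v ∈ S, (closedNbhd H v).card := Finset.sum_le_sum fun v hv =>
          deg_update_sub_one_le st u S (fun e => huS (e ▸ hv))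
      _ = (S.biUnion (closedNbhd H)).card := (Finset.card_biUnion hdisj).symm
      _ ≤ Fintype.card V := Finset.card_le_univ _
  have hdist : ∀ w, G.edist u w ≤ 3 := by
    intro w
    by_cases hw : w = u
    · simp [hw]
    obtain ⟨s, hs, hsw⟩ := hmax w hw
    obtain ⟨x, hxs, hxw⟩ := Finset.not_disjoint_iff.1 hsw
    have h1 : G.edist u s ≤ 1 := by
      refine (SimpleGraph.edist_eq_one_iff_adj.2 ?_).le
      have hne : u ≠ s := fun e => huS (e ▸ hs)
      simp [hG, netG, SimpleGraph.fromRel_adj, hne, hs]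
    have h2 := edist_le_one_of_mem hHG hxs
    have h3 := edist_le_one_of_mem hHG hxw
    rw [SimpleGraph.edist_comm] at h3
    calc G.edist u w ≤ G.edist u s + G.edist s w := SimpleGraph.edist_triangle
      _ ≤ G.edist u s + (G.edist s x + G.edist x w) := by
          gcongr; exact SimpleGraph.edist_triangle
      _ ≤ 1 + (1 + 1) := by gcongr
      _ = 3 := by norm_num
  unfold cost
  rw [Function.update_self]
  calc _ ≤ ((Fintype.card V : ℕ) : ℕ∞) + ∑ _w : V, (3 : ℕ∞) := by
        gcongr
        exact hdist _
    _ = _ := by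
        rw [Finset.sum_const, Finset.card_univ, nsmul_eq_mul]
        push_cast
        ring

lemma card_sub_one_le_cost (st : Strategy V) (u : V) :
    ((Fintype.card V - 1 : ℕ) : ℕ∞) ≤ cost st u := by
  calc ((Fintype.card V - 1 : ℕ) : ℕ∞) = ∑ _w ∈ Finset.univ.erase u, (1 : ℕ∞) := by
        rw [Finset.sum_const, Finset.card_erase_of_mem (Finset.mem_univ u), Finset.card_univ]
        simp
    _ ≤ ∑ w ∈ Finset.univ.erase u, (netG st).edist u w := by
        refine Finset.sum_le_sum fun w hw => ?_
        rw [Order.one_le_iff_pos]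
        exact SimpleGraph.edist_pos_of_ne (Finset.ne_of_mem_erase hw).symm
    _ ≤ ∑ w, (netG st).edist u w :=
        Finset.sum_le_sum_of_subset (Finset.erase_subset _ _)
    _ ≤ cost st u := le_add_self

/-- The Price of Anarchy of the degNCG is bounded by the
absolute constant `20`: for every `n ≥ 2`, every Nash equilibrium with
connected induced graph has social cost at most `20` times the social cost of
any strategy vector on the same node set with connected induced graph. -/
theorem PoA_constant :
    ∀ (n : ℕ), 2 ≤ n → ∀ st : Strategy (Fin n), Valid st → IsNE st →
      (netG st).Connected →
      ∀ st' : Strategy (Fin n), Valid st' → (netG st').Connected →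
        social st ≤ 20 * social st' := by
  intro n hn st _ hNE _ st' _ _
  unfold social
  rw [Finset.mul_sum]
  refine Finset.sum_le_sum fun u _ => ?_
  have h1 := cost_le_of_isNE hNE u
  have h2 := card_sub_one_le_cost st' u
  rw [Fintype.card_fin] at h1 h2
  calc cost st u ≤ ((4 * n : ℕ) : ℕ∞) := h1
    _ ≤ ((20 * (n - 1) : ℕ) : ℕ∞) := by
        exact_mod_cast (by omega : 4 * n ≤ 20 * (n - 1))
    _ = 20 * ((n - 1 : ℕ) : ℕ∞) := by rw [Nat.cast_mul]; rfl
    _ ≤ 20 * cost st' u := by gcongr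
end
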